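/- There exists a constant C > 0 such that for every integer n ≥ 1, log K_n(1, 1, …, 1, −n) ≥ (n/4)·(log n)² − C·n·log(n+1) (natural logarithm). Moreover, K_n(1, 1, …, 1, −n) ≥ (n+1)^{n−1} for every n ≥ 3000. -/

import Mathlib

open Finset

/-- The entropy-like function `h(t) = (t+1)·log(t+1) − t·log t` (with `h 0 = 0`
since `Real.log 0 = 0`). -/
noncomputable def entH (t : ℝ) : ℝ := (t + 1) * Real.log (t + 1) - t * Real.log t

/-- `f` is an integer flow on the complete graph `k_{n+1}` with netflow `N`:
`f i j` is the flow on the edge `(i,j)` for `i < j`, it vanishes for `i ≥ j`,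
and the netflow at each vertex `i` is `N i`. -/
def IsIntFlow (n : ℕ) (N : Fin (n + 1) → ℤ) (f : Fin (n + 1) → Fin (n + 1) → ℕ) : Prop :=
  (∀ i j : Fin (n + 1), ¬ i < j → f i j = 0) ∧
  ∀ i : Fin (n + 1),
    (∑ j : Fin (n + 1), if i < j then (f i j : ℤ) else 0) -
      (∑ k : Fin (n + 1), if k < i then (f k i : ℤ) else 0) = N i

/-- The Kostant partition function: the number of integer flows on the complete
graph `k_{n+1}` with netflow `N`. -/
noncomputable def Kn (n : ℕ) (N : Fin (n + 1) → ℤ) : ℕ :=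
  Nat.card {f : Fin (n + 1) → Fin (n + 1) → ℕ // IsIntFlow n N f}

/-- The flow polytope of the complete graph `k_{n+1}` with netflow `N`. -/
def FlowPolytope (n : ℕ) (N : Fin (n + 1) → ℝ) : Set (Fin (n + 1) → Fin (n + 1) → ℝ) :=
  {f | (∀ i j : Fin (n + 1), i < j → 0 ≤ f i j) ∧
    (∀ i j : Fin (n + 1), ¬ i < j → f i j = 0) ∧
    ∀ i : Fin (n + 1),
      (∑ j : Fin (n + 1), if i < j then f i j else 0) -
        (∑ k : Fin (n + 1), if k < i then f k i else 0) = N i}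

/-- The flow entropy `H(f)`. -/
noncomputable def flowEntropy (n : ℕ) (N : Fin (n + 1) → ℝ)
    (f : Fin (n + 1) → Fin (n + 1) → ℝ) : ℝ :=
  (∑ i : Fin (n + 1), ∑ j : Fin (n + 1), if i < j then entH (f i j) else 0) +
  ∑ j : Fin (n + 1), if 0 < (j : ℕ) ∧ (j : ℕ) < n then
    entH (∑ i : Fin (n + 1), if i < j then (N i - f i j) else 0) else 0

/-- Partial sums `s_k = N_0 + ⋯ + N_k`. -/
def sPartial (n : ℕ) (N : Fin (n + 1) → ℤ) (k : ℕ) : ℤ :=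
  ∑ j : Fin (n + 1), if (j : ℕ) ≤ k then N j else 0

/-- Extend `(N_0,…,N_{n−1})` to the netflow vector `(N_0,…,N_{n−1},−∑ N_i)`. -/
def extend (n : ℕ) (N : Fin n → ℤ) : Fin (n + 1) → ℤ := Fin.snoc N (-∑ i, N i)

/-- Flow between consecutive blocks. -/
def Gf (e s c : ℕ) (a : ℕ → ℕ → ℕ) (u v : ℕ) : ℕ :=
  (if (u < e ↔ v < e) then a (u % e) (v % e) else s - a (u % e) (v % e)) +
    (if u = v then c else 0)

lemma Gf_row (e s c : ℕ) (a : ℕ → ℕ → ℕ) (ha : ∀ x y, a x y ≤ s) (u : ℕ) (hu : u < e + e) :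
    ∑ v ∈ range (e + e), Gf e s c a u v = e * s + c := by
  unfold Gf
  rw [Finset.sum_add_distrib, Finset.sum_range_add]
  congr 1
  · rw [← Finset.sum_add_distrib]
    rw [Finset.sum_congr rfl (g := fun _ => s)]
    · simp
    · intro v hv
      have hv' := Finset.mem_range.1 hv
      have := ha (u % e) (v % e)
      have h1 : (e + v) % e = v % e := by simp
      rw [h1]
      by_cases h : u < e
      · simp [h, hv']; omega
      · simp [h, hv']; omega
  · simp [hu]

lemma Gf_col (e s c : ℕ) (a : ℕ → ℕ → ℕ) (ha : ∀ x y, a x y ≤ s) (v : ℕ) (hv : v < e + e) :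
    ∑ u ∈ range (e + e), Gf e s c a u v = e * s + c := by
  rw [← Gf_row e s c (fun x y => a y x) (fun x y => ha y x) v hv]
  refine Finset.sum_congr rfl fun u _ => ?_
  unfold Gf
  simp only [eq_comm (a := u) (b := v), iff_comm (a := u < e)]

lemma sum_block (d k N : ℕ) (hd : 0 < d) (hN : (k + 1) * d ≤ N) (h : ℕ → ℕ) :
    ∑ j ∈ range N, (if j / d = k then h (j % d) else 0) = ∑ v ∈ range d, h v := by
  obtain ⟨r, rfl⟩ := Nat.exists_eq_add_of_le hN
  rw [Finset.sum_range_add, show (k + 1) * d = k * d + d by ring, Finset.sum_range_add]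
  rw [Finset.sum_eq_zero, Finset.sum_congr rfl (g := h), Finset.sum_eq_zero (s := range r)]
  · simp
  · intro x hx
    rw [if_neg]
    intro hh
    have := Nat.div_lt_iff_lt_mul (x := k * d + d + x) (y := k + 1) hd
    rw [hh] at this
    have := this.1 (by omega)
    nlinarith
  · intro x hx
    have hx := Finset.mem_range.1 hx
    rw [if_pos, Nat.mul_comm, Nat.mul_add_mod, Nat.mod_eq_of_lt hx]
    rw [Nat.add_comm, Nat.add_mul_div_right _ _ hd, Nat.div_eq_of_lt hx, Nat.zero_add]
  · intro x hx
    have hx := Finset.mem_range.1 hx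
    rw [if_neg]
    exact ((Nat.div_lt_iff_lt_mul hd).2 hx).ne

/-- The whole flow. -/
def Ff (n e B : ℕ) (a : ℕ → ℕ → ℕ → ℕ) (i j : ℕ) : ℕ :=
  if j < (e + e) * B then
    (if j / (e + e) = i / (e + e) + 1 then
      Gf e ((i / (e + e) + 1) / e) ((i / (e + e) + 1) % e) (a (i / (e + e)))
        (i % (e + e)) (j % (e + e)) else 0)
  else if j = n ∧ i < n then
    (if i < (e + e) * (B - 1) then 0 else if i < (e + e) * B then B else 1) else 0

lemma Ff_zero (n e B : ℕ) (a : ℕ → ℕ → ℕ → ℕ) (i j : ℕ) (h : ¬ i < j) : Ff n e B a i j = 0 := by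
  unfold Ff
  split_ifs with h1 h2 h3
  · exfalso
    have : j / (e + e) ≤ i / (e + e) := Nat.div_le_div_right (by omega)
    omega
  all_goals first | rfl | omega

lemma Ff_out (n e B : ℕ) (he : 0 < e) (hB : 0 < B) (hn : (e + e) * B ≤ n) (a : ℕ → ℕ → ℕ → ℕ)
    (ha : ∀ b x y, a b x y ≤ (b + 1) / e) (i : ℕ) (hi : i < n) :
    ∑ j ∈ range (n + 1), Ff n e B a i j = if i < (e + e) * B then i / (e + e) + 1 else 1 := by
  have hd : 0 < e + e := by omega
  obtain ⟨r, rfl⟩ := Nat.exists_eq_add_of_le hn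
  rw [Finset.sum_range_succ, Finset.sum_range_add]
  have h2 : ∑ x ∈ range r, Ff ((e + e) * B + r) e B a i ((e + e) * B + x) = 0 := by
    refine Finset.sum_eq_zero fun x hx => ?_
    have hx := Finset.mem_range.1 hx
    unfold Ff
    rw [if_neg (by omega), if_neg (by omega)]
  have h3 : Ff ((e + e) * B + r) e B a i ((e + e) * B + r) =
      if i < (e + e) * (B - 1) then 0 else if i < (e + e) * B then B else 1 := by
    unfold Ff
    rw [if_neg (by omega), if_pos ⟨rfl, hi⟩]
  have h1 : ∑ j ∈ range ((e + e) * B), Ff ((e + e) * B + r) e B a i j =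
      ∑ j ∈ range ((e + e) * B), (if j / (e + e) = i / (e + e) + 1 then
      Gf e ((i / (e + e) + 1) / e) ((i / (e + e) + 1) % e) (a (i / (e + e)))
        (i % (e + e)) (j % (e + e)) else 0) := by
    refine Finset.sum_congr rfl fun x hx => ?_
    have hx := Finset.mem_range.1 hx
    unfold Ff
    rw [if_pos hx]
  rw [h1, h2, h3]
  by_cases c1 : i < (e + e) * (B - 1)
  · have c2 : i < (e + e) * B := lt_of_lt_of_le c1 (Nat.mul_le_mul_left _ (by omega))
    have hb : i / (e + e) < B - 1 := (Nat.div_lt_iff_lt_mul hd).2 (by rwa [mul_comm])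
    rw [sum_block (e + e) _ _ hd _ (Gf e ((i / (e + e) + 1) / e) ((i / (e + e) + 1) % e)
      (a (i / (e + e))) (i % (e + e))), Gf_row _ _ _ _ (ha _) _ (Nat.mod_lt _ hd)]
    · simp [c1, c2, Nat.div_add_mod]
    · rw [mul_comm]; exact Nat.mul_le_mul_left _ (by omega)
  · have hb : B - 1 ≤ i / (e + e) := (Nat.le_div_iff_mul_le hd).2 (by rw [mul_comm]; omega)
    rw [Finset.sum_eq_zero]
    · by_cases c2 : i < (e + e) * B
      · have : i / (e + e) < B := (Nat.div_lt_iff_lt_mul hd).2 (by rwa [mul_comm])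
        simp only [c1, c2, if_true, if_false]; omega
      · simp [c1, c2]
    · intro x hx
      have hx := Finset.mem_range.1 hx
      have : x / (e + e) < B := (Nat.div_lt_iff_lt_mul hd).2 (by rwa [mul_comm])
      rw [if_neg (by omega)]

lemma Ff_in (n e B : ℕ) (he : 0 < e) (hn : (e + e) * B ≤ n) (a : ℕ → ℕ → ℕ → ℕ)
    (ha : ∀ b x y, a b x y ≤ (b + 1) / e) (i : ℕ) (hi : i < n) :
    ∑ k ∈ range (n + 1), Ff n e B a k i = if i < (e + e) * B then i / (e + e) else 0 := by
  have hd : 0 < e + e := by omega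
  by_cases c : i < (e + e) * B
  · rw [if_pos c]
    rcases Nat.eq_zero_or_pos (i / (e + e)) with h0 | h0
    · rw [h0]
      refine Finset.sum_eq_zero fun k _ => ?_
      unfold Ff
      rw [if_pos c, if_neg (by rw [h0]; exact (Nat.succ_ne_zero _).symm)]
    · obtain ⟨b, hb⟩ : ∃ b, i / (e + e) = b + 1 := ⟨i / (e + e) - 1, by omega⟩
      have h1 : ∑ k ∈ range (n + 1), Ff n e B a k i = ∑ k ∈ range (n + 1),
          (if k / (e + e) = b then (fun u => Gf e ((b + 1) / e) ((b + 1) % e) (a b)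
            u (i % (e + e))) (k % (e + e)) else 0) := by
        refine Finset.sum_congr rfl fun k _ => ?_
        unfold Ff
        rw [if_pos c, hb]
        by_cases hk : k / (e + e) = b
        · simp [hk]
        · rw [if_neg (by omega), if_neg hk]
      rw [h1, sum_block (e + e) _ _ hd _ (fun u => Gf e ((b + 1) / e) ((b + 1) % e) (a b)
            u (i % (e + e))), Gf_col _ _ _ _ (ha _) _ (Nat.mod_lt _ hd), Nat.div_add_mod, hb]
      have := Nat.div_mul_le_self i (e + e)
      rw [hb] at this
      omega
  · rw [if_neg c]
    refine Finset.sum_eq_zero fun k _ => ?_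
    unfold Ff
    rw [if_neg c, if_neg (by omega)]

lemma Ff_in_last (n e B : ℕ) (hB : 0 < B) (hn : (e + e) * B ≤ n) (a : ℕ → ℕ → ℕ → ℕ) :
    ∑ k ∈ range (n + 1), Ff n e B a k n = n := by
  rw [Finset.sum_range_succ, Ff_zero _ _ _ _ _ _ (lt_irrefl n), add_zero]
  obtain ⟨r, rfl⟩ := Nat.exists_eq_add_of_le hn
  obtain ⟨b, rfl⟩ : ∃ b, B = b + 1 := ⟨B - 1, by omega⟩
  have h1 : ∀ k ∈ range ((e + e) * (b + 1) + r), Ff ((e + e) * (b + 1) + r) e (b + 1) a k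
      ((e + e) * (b + 1) + r) = if k < (e + e) * b then 0 else
        if k < (e + e) * (b + 1) then b + 1 else 1 := by
    intro k hk
    have hk := Finset.mem_range.1 hk
    unfold Ff
    rw [if_neg (by omega), if_pos ⟨rfl, hk⟩, Nat.add_sub_cancel]
  rw [Finset.sum_congr rfl h1, Finset.sum_range_add, show (e + e) * (b + 1) = (e + e) * b + (e + e)
    by ring, Finset.sum_range_add]
  rw [Finset.sum_eq_zero, Finset.sum_congr rfl (g := fun _ => b + 1),
    Finset.sum_congr (s₁ := range r) rfl (g := fun _ => 1)]
  · simp; ring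
  · intro x hx
    rw [if_neg (by omega), if_neg (by omega)]
  · intro x hx
    have hx := Finset.mem_range.1 hx
    rw [if_neg (by omega), if_pos (by omega)]
  · intro x hx
    have hx := Finset.mem_range.1 hx
    rw [if_pos hx]

lemma Ff_flow (n e B : ℕ) (he : 0 < e) (hB : 0 < B) (hn : (e + e) * B ≤ n) (a : ℕ → ℕ → ℕ → ℕ)
    (ha : ∀ b x y, a b x y ≤ (b + 1) / e) :
    IsIntFlow n (fun i => if (i : ℕ) = n then -(n : ℤ) else 1)
      (fun i j => Ff n e B a i j) := by
  refine ⟨fun i j h => Ff_zero _ _ _ _ _ _ (by simpa using h), fun i => ?_⟩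
  have e1 : (∑ j : Fin (n + 1), if i < j then (Ff n e B a i j : ℤ) else 0) =
      ((∑ j ∈ range (n + 1), Ff n e B a i j : ℕ) : ℤ) := by
    rw [← Fin.sum_univ_eq_sum_range (fun j => Ff n e B a i j)]
    push_cast
    refine Finset.sum_congr rfl fun j _ => ?_
    split_ifs with h
    · rfl
    · rw [Ff_zero _ _ _ _ _ _ (by simpa using h)]; rfl
  have e2 : (∑ k : Fin (n + 1), if k < i then (Ff n e B a k i : ℤ) else 0) =
      ((∑ k ∈ range (n + 1), Ff n e B a k i : ℕ) : ℤ) := by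
    rw [← Fin.sum_univ_eq_sum_range (fun k => Ff n e B a k i)]
    push_cast
    refine Finset.sum_congr rfl fun j _ => ?_
    split_ifs with h
    · rfl
    · rw [Ff_zero _ _ _ _ _ _ (by simpa using h)]; rfl
  rw [e1, e2]
  beta_reduce
  by_cases hi : (i : ℕ) = n
  · rw [if_pos hi, hi, Ff_in_last n e B hB hn a, Finset.sum_eq_zero]
    · simp
    · intro j hj
      have hj := Finset.mem_range.1 hj
      exact Ff_zero _ _ _ _ _ _ (by omega)
  · have hi' : (i : ℕ) < n := by omega
    rw [if_neg hi, Ff_out n e B he hB hn a ha i hi', Ff_in n e B he hn a ha i hi']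
    split_ifs <;> push_cast <;> ring

lemma flows_finite (n : ℕ) (N : Fin (n + 1) → ℤ) :
    Finite {f : Fin (n + 1) → Fin (n + 1) → ℕ // IsIntFlow n N f} := by
  set M : ℤ := -∑ i : Fin (n + 1), (i : ℤ) * N i with hM
  have key : {f : Fin (n + 1) → Fin (n + 1) → ℕ | IsIntFlow n N f} ⊆
      Set.Iic (fun _ _ => M.toNat) := by
    intro f hf i j
    by_cases hij : i < j
    swap
    · rw [hf.1 i j hij]; exact Nat.zero_le _
    have h1 : M = ∑ i : Fin (n + 1), ∑ j : Fin (n + 1),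
        (if i < j then ((j : ℤ) - i) * f i j else 0) := by
      rw [hM]
      have : ∀ i : Fin (n + 1), (i : ℤ) * N i =
          (∑ j : Fin (n + 1), if i < j then (i : ℤ) * f i j else 0) -
          (∑ k : Fin (n + 1), if k < i then (i : ℤ) * f k i else 0) := by
        intro i
        rw [← hf.2 i, mul_sub, Finset.mul_sum, Finset.mul_sum]
        simp only [mul_ite, mul_zero]
      rw [Finset.sum_congr rfl fun i _ => this i, Finset.sum_sub_distrib,
        Finset.sum_comm (f := fun (i k : Fin (n + 1)) => if k < i then (i : ℤ) * f k i else 0),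
        neg_sub, ← Finset.sum_sub_distrib]
      refine Finset.sum_congr rfl fun i _ => ?_
      rw [← Finset.sum_sub_distrib]
      refine Finset.sum_congr rfl fun j _ => ?_
      split_ifs <;> ring
    have hnn : ∀ i j : Fin (n + 1), 0 ≤ (if i < j then ((j : ℤ) - i) * f i j else 0) := by
      intro i j
      split_ifs with h
      · have : (i : ℕ) < j := h
        exact mul_nonneg (by omega) (by positivity)
      · exact le_rfl
    have h2 : (f i j : ℤ) ≤ M := by
      calc (f i j : ℤ) ≤ (if i < j then ((j : ℤ) - i) * f i j else 0) := by
            rw [if_pos hij]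
            have : (i : ℕ) < j := hij
            have h3 : (1 : ℤ) ≤ (j : ℤ) - i := by omega
            nlinarith [Int.natCast_nonneg (f i j)]
        _ ≤ ∑ j : Fin (n + 1), (if i < j then ((j : ℤ) - i) * f i j else 0) :=
            Finset.single_le_sum (f := fun j : Fin (n + 1) =>
              (if i < j then ((j : ℤ) - i) * f i j else 0)) (fun j _ => hnn i j) (Finset.mem_univ j)
        _ ≤ M := by
            rw [h1]
            exact Finset.single_le_sum (f := fun i : Fin (n + 1) => ∑ j : Fin (n + 1),
              (if i < j then ((j : ℤ) - i) * f i j else 0))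
              (fun i _ => Finset.sum_nonneg fun j _ => hnn i j) (Finset.mem_univ i)
    show f i j ≤ M.toNat
    omega
  exact ((Set.finite_Iic _).subset key).to_subtype

/-- Extension of parameters. -/
def extP (e B : ℕ) (p : (b : Fin (B - 1)) → Fin e → Fin e → Fin ((b + 1) / e + 1)) :
    ℕ → ℕ → ℕ → ℕ := fun b x y =>
  if h : b < B - 1 ∧ x < e ∧ y < e then p ⟨b, h.1⟩ ⟨x, h.2.1⟩ ⟨y, h.2.2⟩ else 0

lemma extP_le (e B : ℕ) (p : (b : Fin (B - 1)) → Fin e → Fin e → Fin ((b + 1) / e + 1))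
    (b x y : ℕ) : extP e B p b x y ≤ (b + 1) / e := by
  unfold extP
  split_ifs with h
  · have := (p ⟨b, h.1⟩ ⟨x, h.2.1⟩ ⟨y, h.2.2⟩).2
    simp only at this
    omega
  · exact Nat.zero_le _

lemma Ff_val (n e B : ℕ) (a : ℕ → ℕ → ℕ → ℕ) (b x y : ℕ)
    (hb : b < B - 1) (hx : x < e) (hy : y < e) :
    Ff n e B a ((e + e) * b + x) ((e + e) * (b + 1) + y) =
      a b x y + (if x = y then (b + 1) % e else 0) := by
  have hd : 0 < e + e := by omega
  have h1 : (e + e) * (b + 1) + y < (e + e) * B := by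
    calc (e + e) * (b + 1) + y < (e + e) * (b + 1 + 1) := by rw [mul_add _ (b + 1)]; omega
      _ ≤ _ := Nat.mul_le_mul_left _ (by omega)
  unfold Ff
  rw [if_pos h1]
  have hxd : x < e + e := by omega
  have hyd : y < e + e := by omega
  rw [Nat.mul_add_div hd, Nat.mul_add_div hd, Nat.div_eq_of_lt hxd, Nat.div_eq_of_lt hyd,
    Nat.mul_add_mod, Nat.mul_add_mod, Nat.mod_eq_of_lt hxd, Nat.mod_eq_of_lt hyd]
  simp [Gf, hx, hy, Nat.mod_eq_of_lt hx, Nat.mod_eq_of_lt hy]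

lemma Kn_ge_prod (n e B : ℕ) (he : 0 < e) (hB : 0 < B) (hn : (e + e) * B ≤ n) :
    ∏ b ∈ range (B - 1), ((b + 1) / e + 1) ^ (e * e) ≤
      Kn n fun i => if (i : ℕ) = n then -(n : ℤ) else 1 := by
  have hcard : Nat.card ((b : Fin (B - 1)) → Fin e → Fin e → Fin ((b + 1) / e + 1)) =
      ∏ b ∈ range (B - 1), ((b + 1) / e + 1) ^ (e * e) := by
    rw [Nat.card_eq_fintype_card, Fintype.card_pi,
      ← Fin.prod_univ_eq_prod_range (fun b => ((b + 1) / e + 1) ^ (e * e))]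
    refine Finset.prod_congr rfl fun b _ => ?_
    simp [pow_mul]
  rw [← hcard]
  have := flows_finite n (fun i => if (i : ℕ) = n then -(n : ℤ) else 1)
  unfold Kn
  refine Nat.card_le_card_of_injective
    (fun p => ⟨fun i j => Ff n e B (extP e B p) i j, Ff_flow n e B he hB hn _ (extP_le e B p)⟩) ?_
  intro p q hpq
  have hpq := congrArg Subtype.val hpq
  simp only at hpq
  funext b x y
  have hb := b.2
  have h2 : (e + e) * (b + 1) + y < n + 1 := by
    have hy := y.2
    calc (e + e) * (b + 1) + (y : ℕ) < (e + e) * (b + 1 + 1) := by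
          rw [mul_add _ ((b : ℕ) + 1)]; omega
      _ ≤ (e + e) * B := Nat.mul_le_mul_left _ (by omega)
      _ ≤ n + 1 := by omega
  have h1 : (e + e) * b + x < n + 1 := by
    have hx := x.2
    have : (e + e) * ((b : ℕ) + 1) = (e + e) * b + (e + e) := by ring
    omega
  have := congrFun (congrFun hpq ⟨_, h1⟩) ⟨_, h2⟩
  simp only at this
  rw [Ff_val n e B _ b x y hb x.2 y.2, Ff_val n e B _ b x y hb x.2 y.2] at this
  have this := Nat.add_right_cancel this
  unfold extP at this
  rw [dif_pos ⟨hb, x.2, y.2⟩, dif_pos ⟨hb, x.2, y.2⟩] at this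
  exact Fin.ext this

lemma prod_floor (e Q : ℕ) (he : 0 < e) :
    ∏ t ∈ range (Q * e), (t / e + 1) = Q.factorial ^ e := by
  induction Q with
  | zero => simp
  | succ Q ih =>
    rw [show (Q + 1) * e = Q * e + e by ring, Finset.prod_range_add, ih, Nat.factorial_succ,
      mul_pow, mul_comm]
    congr 1
    rw [Finset.prod_congr rfl (g := fun _ => Q + 1)]
    · simp
    · intro x hx
      have hx := Finset.mem_range.1 hx
      rw [Nat.add_comm (Q * e), Nat.add_mul_div_right _ _ he, Nat.div_eq_of_lt hx, Nat.zero_add]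

lemma Kn_ge (n e Q : ℕ) (he : 0 < e) (hQ : 0 < Q) (hn : 2 * e ^ 2 * Q ≤ n) :
    Q.factorial ^ (e ^ 3) ≤ Kn n fun i => if (i : ℕ) = n then -(n : ℤ) else 1 := by
  have hB : 0 < Q * e := Nat.mul_pos hQ he
  refine le_trans (le_of_eq ?_) (Kn_ge_prod n e (Q * e) he hB (le_trans (le_of_eq (by ring)) hn))
  rw [Finset.prod_pow, show e ^ 3 = e * (e * e) by ring, pow_mul, ← prod_floor e Q he]
  congr 1
  obtain ⟨m, hm⟩ : ∃ m, Q * e = m + 1 := ⟨Q * e - 1, by omega⟩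
  rw [hm, Finset.prod_range_succ', Nat.add_sub_cancel]
  simp

lemma fact_bound (Q : ℕ) (hQ : 15 ≤ Q) : (200 * (Q + 1)) ^ (Q + 1) ≤ Q.factorial ^ 5 := by
  induction Q, hQ using Nat.le_induction with
  | base => norm_num [Nat.factorial]
  | succ Q hQ ih =>
    have h3 : (Q + 2) ^ (Q + 1) ≤ 3 * (Q + 1) ^ (Q + 1) := by
      have hpos : (0 : ℝ) < (Q : ℝ) + 1 := by positivity
      have h : ((Q : ℝ) + 2) ^ (Q + 1) ≤ 3 * ((Q : ℝ) + 1) ^ (Q + 1) := by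
        have h1 : ((Q : ℝ) + 2) = (1 / ((Q : ℝ) + 1) + 1) * ((Q : ℝ) + 1) := by field_simp; ring
        rw [h1, mul_pow]
        refine mul_le_mul_of_nonneg_right ?_ (by positivity)
        calc (1 / ((Q : ℝ) + 1) + 1) ^ (Q + 1) ≤ (Real.exp (1 / ((Q : ℝ) + 1))) ^ (Q + 1) :=
              pow_le_pow_left₀ (by positivity) (Real.add_one_le_exp _) _
          _ = Real.exp 1 := by
              rw [← Real.exp_nat_mul]; congr 1; push_cast; field_simp
          _ ≤ 3 := by linarith [Real.exp_one_lt_d9]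
      exact_mod_cast h
    have h5 : 600 * (Q + 2) ≤ (Q + 1) ^ 5 := by
      have : 15 ^ 4 ≤ (Q + 1) ^ 4 := Nat.pow_le_pow_left (by omega) 4
      calc 600 * (Q + 2) ≤ 15 ^ 4 * (Q + 1) := by omega
        _ ≤ (Q + 1) ^ 4 * (Q + 1) := Nat.mul_le_mul_right _ this
        _ = _ := by ring
    rw [Nat.factorial_succ, mul_pow (Q + 1)]
    calc (200 * (Q + 1 + 1)) ^ (Q + 1 + 1)
        = 200 * (Q + 2) * (200 ^ (Q + 1) * (Q + 2) ^ (Q + 1)) := by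
          rw [pow_succ, ← mul_pow]; ring
      _ ≤ 200 * (Q + 2) * (200 ^ (Q + 1) * (3 * (Q + 1) ^ (Q + 1))) := by gcongr
      _ = 600 * (Q + 2) * (200 * (Q + 1)) ^ (Q + 1) := by rw [mul_pow]; ring
      _ ≤ (Q + 1) ^ 5 * Q.factorial ^ 5 := Nat.mul_le_mul h5 ih

lemma part_two (n : ℕ) (hn : 3000 ≤ n) :
    (n + 1) ^ (n - 1) ≤ Kn n fun i => if (i : ℕ) = n then -(n : ℤ) else 1 := by
  have hQ : 15 ≤ n / 200 := by omega
  refine le_trans ?_ (Kn_ge n 10 (n / 200) (by norm_num) (by omega) (by omega))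
  calc (n + 1) ^ (n - 1) ≤ (200 * (n / 200 + 1)) ^ (n - 1) := Nat.pow_le_pow_left (by omega) _
    _ ≤ (200 * (n / 200 + 1)) ^ ((n / 200 + 1) * 200) :=
        Nat.pow_le_pow_right (by omega) (by omega)
    _ = ((200 * (n / 200 + 1)) ^ (n / 200 + 1)) ^ 200 := by rw [pow_mul]
    _ ≤ ((n / 200).factorial ^ 5) ^ 200 := Nat.pow_le_pow_left (fact_bound _ hQ) _
    _ = _ := by rw [← pow_mul]; norm_num

lemma part_one (n : ℕ) (hn : 1 ≤ n) :
    ((n : ℝ) / 4) * Real.log n ^ 2 - 1000 * n * Real.log ((n : ℝ) + 1) ≤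
          Real.log (Kn n fun i => if (i : ℕ) = n then -(n : ℤ) else 1) := by
  have hn' : (1 : ℝ) ≤ n := by exact_mod_cast hn
  have hx0 : 0 ≤ Real.log n := Real.log_nonneg hn'
  have hx1 : Real.log n ≤ Real.log ((n : ℝ) + 1) := Real.log_le_log (by linarith) (by linarith)
  by_cases hx : Real.log n ≤ 4000
  · have h0 := Real.log_natCast_nonneg (Kn n fun i => if (i : ℕ) = n then -(n : ℤ) else 1)
    refine le_trans ?_ h0
    have h1 : Real.log n ^ 2 ≤ 4000 * Real.log ((n : ℝ) + 1) := by nlinarith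
    have h2 : (n : ℝ) / 4 * Real.log n ^ 2 ≤ (n : ℝ) / 4 * (4000 * Real.log ((n : ℝ) + 1)) :=
      mul_le_mul_of_nonneg_left h1 (by positivity)
    linarith
  · push Not at hx
    obtain ⟨y, hy⟩ : ∃ y, y = Real.log n / 2 := ⟨_, rfl⟩
    have hxy : Real.log n = 2 * y := by linarith
    have hy2 : 2000 < y := by linarith
    obtain ⟨s, hs⟩ : ∃ s, s = Real.exp y := ⟨_, rfl⟩
    have hns : (n : ℝ) = s ^ 2 := by
      rw [hs, ← Real.exp_nat_mul, ← Real.exp_log (show (0 : ℝ) < n by linarith), hxy]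
      norm_num
    have hsy : y ^ 3 / 6 ≤ s := by
      have := Real.pow_div_factorial_le_exp y (by linarith) 3
      rw [hs]
      simpa [Nat.factorial] using this
    have hs4 : 4 ≤ s := by nlinarith [sq_nonneg y]
    obtain ⟨e, he⟩ : ∃ e, e = Nat.sqrt (n / 4) := ⟨_, rfl⟩
    have he1 : e * e ≤ n / 4 := by rw [he]; exact Nat.sqrt_le _
    have he2 : n / 4 < (e + 1) * (e + 1) := by rw [he]; exact Nat.lt_succ_sqrt _
    have he3 : n < 4 * ((e + 1) * (e + 1)) := by omega
    have he3' : s ^ 2 < 4 * (((e : ℝ) + 1) * (e + 1)) := by rw [← hns]; exact_mod_cast he3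
    have hes : s < 2 * ((e : ℝ) + 1) := by
      apply lt_of_pow_lt_pow_left₀ 2 (by positivity)
      linarith
    have hes' : s / 4 ≤ e := by linarith
    have hepos : 0 < e := by
      have : (0 : ℝ) < e := by linarith
      exact_mod_cast this
    have hK := Kn_ge n e 2 hepos (by norm_num) (by rw [pow_two]; omega)
    have hK' : Real.log ((2 : ℝ) ^ (e ^ 3)) ≤
        Real.log (Kn n fun i => if (i : ℕ) = n then -(n : ℤ) else 1) := by
      apply Real.log_le_log (by positivity)
      exact_mod_cast hK
    rw [Real.log_pow] at hK'
    push_cast at hK'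
    refine le_trans ?_ hK'
    have hl2 : (0.6 : ℝ) ≤ Real.log 2 := by linarith [Real.log_two_gt_d9]
    have hc : (s / 4) ^ 3 ≤ (e : ℝ) ^ 3 := pow_le_pow_left₀ (by linarith) hes' 3
    have hfin : s ^ 2 / 4 * (2 * y) ^ 2 ≤ (s / 4) ^ 3 * 0.6 := by
      have h1 : 128 * y ^ 2 ≤ s := by nlinarith [sq_nonneg y]
      have h2 : s ^ 2 * (128 * y ^ 2) ≤ s ^ 2 * s := mul_le_mul_of_nonneg_left h1 (sq_nonneg _)
      nlinarith
    have h4 : (s / 4) ^ 3 * 0.6 ≤ (e : ℝ) ^ 3 * Real.log 2 :=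
      mul_le_mul hc hl2 (by norm_num) (by positivity)
    have h5 : 0 ≤ 1000 * (n : ℝ) * Real.log ((n : ℝ) + 1) :=
      mul_nonneg (by positivity) (by linarith)
    rw [hxy]
    have h6 : (n : ℝ) / 4 * (2 * y) ^ 2 = s ^ 2 / 4 * (2 * y) ^ 2 := by rw [hns]
    linarith

/-- **Theorem (Tesler case `N = (1,1,…,1,−n)`).** There is a constant `C > 0`
such that for every `n ≥ 1`,
`log K_n(1,…,1,−n) ≥ (n/4)·(log n)² − C·n·log(n+1)`;
moreover `K_n(1,…,1,−n) ≥ (n+1)^{n−1}` for every `n ≥ 3000`. -/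
theorem kostant_Tesler_lower_bound :
    ∃ C : ℝ, 0 < C ∧
      (∀ n : ℕ, 1 ≤ n →
        ((n : ℝ) / 4) * Real.log n ^ 2 - C * n * Real.log ((n : ℝ) + 1) ≤
          Real.log (Kn n fun i => if (i : ℕ) = n then -(n : ℤ) else 1)) ∧
      (∀ n : ℕ, 3000 ≤ n →
        (n + 1) ^ (n - 1) ≤ Kn n fun i => if (i : ℕ) = n then -(n : ℤ) else 1) := by
  exact ⟨1000, by norm_num, part_one, part_two⟩
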